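/- arXiv:math/0512636 — 2 statements merged into one kernel-verified Lean document; each statement's English description precedes it below -/
import Mathlib

section
/- For every nonempty subset A ⊆ {0,1}^n with |A| ≤ 2^{n−1}, letting μ = |A|/2^n, the influences of the indicator function of A satisfy Σ_{i=1}^n I_i(1_A) ≥ (2/log 2) · μ · log(1/μ). -/
open Finset

/-- Expectation with respect to the uniform measure on the discrete cube `{0,1}^n`. -/
noncomputable def cubeE {n : ℕ} (f : (Fin n → Bool) → ℝ) : ℝ :=
  (∑ x : Fin n → Bool, f x) / 2 ^ n

/-- `x ⊕ e_i` : flip the `i`-th coordinate of `x`. -/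
def flipAt {n : ℕ} (x : Fin n → Bool) (i : Fin n) : Fin n → Bool :=
  Function.update x i (!x i)

/-- Influence of the `i`-th variable of a Boolean function,
`I_i(f) = Pr_x[f(x) ≠ f(x ⊕ e_i)]` under the uniform measure. -/
noncomputable def infl {n : ℕ} (f : (Fin n → Bool) → Bool) (i : Fin n) : ℝ :=
  cubeE (fun x => if f x ≠ f (flipAt x i) then 1 else 0)

/-- Expectation of a Boolean function under the uniform measure. -/
noncomputable def meanB {n : ℕ} (f : (Fin n → Bool) → Bool) : ℝ :=
  cubeE (fun x => if f x then 1 else 0)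

/-- Conditional expectation given the first `j` coordinates: `condE f j x` is the
average of `f` over all `y` agreeing with `x` in the first `j` coordinates. -/
noncomputable def condE {n : ℕ} (f : (Fin n → Bool) → ℝ) (j : ℕ) (x : Fin n → Bool) : ℝ :=
  (∑ y : Fin n → Bool, if ∀ k : Fin n, (k : ℕ) < j → y k = x k then f y else 0) / 2 ^ (n - j)

/-- The Dirichlet form `E(f,f) = E_x Σ_i (f(x) - f(x ⊕ e_i))²`. -/
noncomputable def energy {n : ℕ} (f : (Fin n → Bool) → ℝ) : ℝ :=
  cubeE (fun x => ∑ i : Fin n, (f x - f (flipAt x i)) ^ 2)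

/-- Entropy of a nonnegative function: `Ent(g) = E[g log g] - E g · log E g`
(the convention `0 log 0 = 0` holds since `Real.log 0 = 0`). -/
noncomputable def ent {n : ℕ} (g : (Fin n → Bool) → ℝ) : ℝ :=
  cubeE (fun x => g x * Real.log (g x)) - cubeE g * Real.log (cubeE g)

/-!
Write `η(t) = -t log t`. The inequality `2 η(E f) ≤ log 2 · ∑ i, I_i(f)` holds for every Boolean
function `f` on the cube, by induction on the dimension. Let `f₀`, `f₁` be the restrictions of `f`
to the two facets of the first coordinate, with means `a` and `b`. The total influence of `f` is the
average of those of `f₀` and `f₁` plus the influence of the first coordinate, which is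
`Pr[f₀ ≠ f₁] ≥ |a - b|`. What remains is the two-point inequality
`2 η((a + b) / 2) ≤ η(a) + η(b) + log 2 · |a - b|`. After normalizing `a + b = 1` it says that the
binary entropy lies above its chord on `[0, 1/2]`.
-/

open Real (log negMulLog negMulLog_mul binEntropy)

theorem two_mul_mul_log_two_le_binEntropy {p : ℝ} (hp₀ : 0 ≤ p) (hp : p ≤ 1 / 2) :
    2 * p * log 2 ≤ binEntropy p := by
  have chord := Real.strictConcave_binEntropy.concaveOn.2
    (show (0 : ℝ) ∈ Set.Icc 0 1 by norm_num) (show (2⁻¹ : ℝ) ∈ Set.Icc 0 1 by norm_num)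
    (show 0 ≤ 1 - 2 * p by linarith) (show 0 ≤ 2 * p by linarith) (by ring)
  have hmid : 2 * p * 2⁻¹ = p := by ring
  simpa [hmid] using chord

theorem negMulLog_add_negMulLog_eq {a b : ℝ} (hab : a + b ≠ 0) :
    negMulLog a + negMulLog b = negMulLog (a + b) + (a + b) * binEntropy (a / (a + b)) := by
  set p := a / (a + b)
  have ha : a = (a + b) * p := (mul_div_cancel₀ a hab).symm
  have hb : b = (a + b) * (1 - p) := by linear_combination -ha
  have hmul_a := negMulLog_mul (a + b) p
  have hmul_b := negMulLog_mul (a + b) (1 - p)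
  rw [← ha] at hmul_a
  rw [← hb] at hmul_b
  rw [hmul_a, hmul_b, Real.binEntropy_eq_negMulLog_add_negMulLog_one_sub]
  ring

theorem two_mul_negMulLog_half (s : ℝ) :
    2 * negMulLog (s / 2) = negMulLog s + s * log 2 := by
  rw [div_eq_mul_inv, negMulLog_mul]
  simp only [negMulLog, Real.log_inv]
  ring

theorem two_mul_negMulLog_midpoint_le {a b : ℝ} (ha : 0 ≤ a) (hb : 0 ≤ b) :
    2 * negMulLog ((a + b) / 2) ≤ negMulLog a + negMulLog b + log 2 * |a - b| := by
  wlog hab : a ≤ b generalizing a b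
  · simpa only [add_comm b, abs_sub_comm b, add_comm (negMulLog b)] using
      this hb ha (le_of_not_ge hab)
  rw [two_mul_negMulLog_half, abs_of_nonpos (sub_nonpos.2 hab)]
  rcases ha.eq_or_lt with rfl | ha
  · simp [mul_comm]
  have hs : 0 < a + b := by positivity
  have hentropy : 2 * a * log 2 ≤ (a + b) * binEntropy (a / (a + b)) :=
    calc 2 * a * log 2 = (a + b) * (2 * (a / (a + b)) * log 2) := by field_simp
      _ ≤ (a + b) * binEntropy (a / (a + b)) := by
        gcongr
        refine two_mul_mul_log_two_le_binEntropy (by positivity) ?_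
        rw [div_le_div_iff₀ hs two_pos]
        linarith
  linarith [negMulLog_add_negMulLog_eq hs.ne']

section Cube

variable {n : ℕ}

/-- The restriction of a function on `{0,1}^(n+1)` to the facet whose first coordinate is `b`, seen
as a function on `{0,1}^n`. It drives the induction on the dimension. -/
def facet {α : Type*} (f : (Fin (n + 1) → Bool) → α) (b : Bool) : (Fin n → Bool) → α :=
  fun y => f (Fin.cons b y)

theorem flipAt_cons_zero (b : Bool) (y : Fin n → Bool) :
    flipAt (Fin.cons b y : Fin (n + 1) → Bool) 0 = Fin.cons (!b) y := by
  simp [flipAt]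

theorem flipAt_cons_succ (b : Bool) (y : Fin n → Bool) (i : Fin n) :
    flipAt (Fin.cons b y : Fin (n + 1) → Bool) i.succ = Fin.cons b (flipAt y i) := by
  simp [flipAt, Fin.cons_update]

theorem cubeE_eq_facet (g : (Fin (n + 1) → Bool) → ℝ) :
    cubeE g = (cubeE (facet g false) + cubeE (facet g true)) / 2 := by
  have hsum : ∑ x, g x = ∑ y, facet g false y + ∑ y, facet g true y := by
    rw [← (Fin.consEquiv fun _ : Fin (n + 1) => Bool).sum_comp, Fintype.sum_prod_type,
      Fintype.sum_bool, add_comm]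
    rfl
  rw [cubeE, hsum, cubeE, cubeE, pow_succ]
  ring

theorem abs_cubeE_sub_cubeE_le (g h : (Fin n → Bool) → ℝ) :
    |cubeE g - cubeE h| ≤ cubeE fun x => |g x - h x| := by
  rw [cubeE, cubeE, cubeE, ← sub_div, ← sum_sub_distrib, abs_div,
    abs_of_pos (show (0 : ℝ) < 2 ^ n by positivity)]
  exact div_le_div_of_nonneg_right (abs_sum_le_sum_abs _ _) (by positivity)

theorem meanB_nonneg (f : (Fin n → Bool) → Bool) : 0 ≤ meanB f :=
  div_nonneg (sum_nonneg fun _ _ => by split_ifs <;> norm_num) (by positivity)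

theorem meanB_eq_facet (f : (Fin (n + 1) → Bool) → Bool) :
    meanB f = (meanB (facet f false) + meanB (facet f true)) / 2 :=
  cubeE_eq_facet _

theorem negMulLog_meanB_fin_zero (f : (Fin 0 → Bool) → Bool) : negMulLog (meanB f) = 0 := by
  rw [meanB, cubeE, Fintype.sum_unique]
  split_ifs <;> simp

theorem meanB_decide_mem (A : Finset (Fin n → Bool)) :
    meanB (fun x => decide (x ∈ A)) = (#A : ℝ) / 2 ^ n := by
  simp [meanB, cubeE]

theorem abs_meanB_sub_meanB_le (f g : (Fin n → Bool) → Bool) :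
    |meanB f - meanB g| ≤ cubeE fun x => if f x ≠ g x then 1 else 0 := by
  refine (abs_cubeE_sub_cubeE_le _ _).trans_eq (congrArg cubeE (funext fun x => ?_))
  cases f x <;> cases g x <;> simp

theorem infl_zero_eq_facet (f : (Fin (n + 1) → Bool) → Bool) :
    infl f 0 = cubeE fun y => if facet f false y ≠ facet f true y then 1 else 0 := by
  rw [infl, cubeE_eq_facet]
  unfold facet
  simp only [flipAt_cons_zero, Bool.not_false, Bool.not_true, ne_comm (a := f (Fin.cons true _)),
    add_self_div_two]

theorem infl_succ_eq_facet (f : (Fin (n + 1) → Bool) → Bool) (i : Fin n) :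
    infl f i.succ = (infl (facet f false) i + infl (facet f true) i) / 2 := by
  rw [infl, cubeE_eq_facet]
  unfold facet
  simp only [flipAt_cons_succ, infl]

theorem sum_infl_facet_add_abs_sub_meanB_le (f : (Fin (n + 1) → Bool) → Bool) :
    (∑ i, infl (facet f false) i + ∑ i, infl (facet f true) i) / 2 +
      |meanB (facet f false) - meanB (facet f true)| ≤ ∑ i, infl f i := by
  rw [Fin.sum_univ_succ, infl_zero_eq_facet, add_comm]
  simp only [infl_succ_eq_facet, ← sum_div, sum_add_distrib]
  gcongr
  exact abs_meanB_sub_meanB_le _ _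

theorem two_mul_negMulLog_meanB_le_log_two_mul_sum_infl (f : (Fin n → Bool) → Bool) :
    2 * negMulLog (meanB f) ≤ log 2 * ∑ i, infl f i := by
  induction n with
  | zero => simp [negMulLog_meanB_fin_zero]
  | succ n ih =>
    set f₀ := facet f false
    set f₁ := facet f true
    calc 2 * negMulLog (meanB f)
        = 2 * negMulLog ((meanB f₀ + meanB f₁) / 2) := by rw [meanB_eq_facet]
      _ ≤ negMulLog (meanB f₀) + negMulLog (meanB f₁) + log 2 * |meanB f₀ - meanB f₁| :=
          two_mul_negMulLog_midpoint_le (meanB_nonneg f₀) (meanB_nonneg f₁)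
      _ ≤ log 2 * ((∑ i, infl f₀ i + ∑ i, infl f₁ i) / 2 + |meanB f₀ - meanB f₁|) := by
          linarith [ih f₀, ih f₁]
      _ ≤ log 2 * ∑ i, infl f i := by
          gcongr
          exact sum_infl_facet_add_abs_sub_meanB_le f

end Cube

theorem edge_isoperimetric_inequality_general {n : ℕ} (A : Finset (Fin n → Bool))
    (hA : A.Nonempty) :
    ∑ i : Fin n, infl (fun x => decide (x ∈ A)) i ≥
      2 / log 2 * ((#A : ℝ) / 2 ^ n) * log (1 / ((#A : ℝ) / 2 ^ n)) := by
  have hbound := two_mul_negMulLog_meanB_le_log_two_mul_sum_infl (fun x => decide (x ∈ A))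
  rw [meanB_decide_mem] at hbound
  set μ := (#A : ℝ) / 2 ^ n
  have hμ : 0 < μ := div_pos (mod_cast hA.card_pos) (by positivity)
  have hlog : 0 < log 2 := Real.log_pos one_lt_two
  calc 2 / log 2 * μ * log (1 / μ) = 2 * negMulLog μ / log 2 := by
        rw [negMulLog, Real.log_div one_ne_zero hμ.ne', Real.log_one]
        ring
    _ ≤ ∑ i, infl (fun x => decide (x ∈ A)) i := by rwa [div_le_iff₀' hlog]

/-- **Edge-isoperimetric inequality** in the cube: for every nonempty `A ⊆ {0,1}^n`
with `|A| ≤ 2^(n-1)` and `μ = |A|/2^n`, the influences of the indicator of `A` satisfy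
`Σ_i I_i(1_A) ≥ (2/log 2) μ log(1/μ)`. -/
theorem edge_isoperimetric_inequality {n : ℕ} (A : Finset (Fin n → Bool))
    (hA : A.Nonempty) (hcard : A.card ≤ 2 ^ (n - 1)) :
    ∑ i : Fin n, infl (fun x => decide (x ∈ A)) i ≥
      2 / Real.log 2 * ((A.card : ℝ) / 2 ^ n) * Real.log (1 / ((A.card : ℝ) / 2 ^ n)) :=
  edge_isoperimetric_inequality_general A hA
end

section
/- For every f : {0,1}^n → ℝ, with E(g,g) = E_x Σ_{j=1}^n (g(x) − g(x⊕e_j))² denoting the Dirichlet form, the martingale differences d_1, …, d_n of f satisfy E(f,f) = Σ_{i=1}^n E(d_i, d_i). -/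
open Finset

/-!
Let `D_i f (x) = f(x) - f(x ⊕ e_i)`. Averaging over the last coordinates commutes with flips, so
`D_i` takes the martingale differences of `f` to those of `D_i f`. Martingale differences are
orthogonal and `D_i f` has mean zero, so `E[(D_i f)²]` is the sum of the second moments of the
martingale differences of `D_i f`; summing over `i` gives the claim. Orthogonality and mean zero
both come from one symmetry: a function whose sign changes under the flip of some coordinate has
mean zero.
-/

theorem flipAt_flipAt {n : ℕ} (x : Fin n → Bool) (i : Fin n) : flipAt (flipAt x i) i = x := by
  simp [flipAt]

theorem flipAt_apply_self {n : ℕ} (x : Fin n → Bool) (i : Fin n) : flipAt x i i = !x i :=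
  Function.update_self ..

theorem flipAt_apply_of_ne {n : ℕ} (x : Fin n → Bool) {i k : Fin n} (h : k ≠ i) :
    flipAt x i k = x k :=
  Function.update_of_ne h ..

theorem flipAt_apply_eq_flipAt_apply_iff {n : ℕ} {x y : Fin n → Bool} {i k : Fin n} :
    flipAt x i k = flipAt y i k ↔ x k = y k := by
  obtain rfl | h := eq_or_ne k i
  · simp only [flipAt_apply_self, Bool.not_inj_iff]
  · simp only [flipAt_apply_of_ne _ h]

theorem sum_comp_flipAt {n : ℕ} {M : Type*} [AddCommMonoid M] (f : (Fin n → Bool) → M)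
    (i : Fin n) : ∑ x, f (flipAt x i) = ∑ x, f x :=
  Equiv.sum_comp (Function.Involutive.toPerm (flipAt · i) (flipAt_flipAt · i)) f

section Expectation

variable {n : ℕ}

theorem cubeE_const (c : ℝ) : cubeE (fun _ : Fin n → Bool => c) = c := by
  simp [cubeE]

theorem cubeE_sub (f g : (Fin n → Bool) → ℝ) :
    cubeE (fun x => f x - g x) = cubeE f - cubeE g := by
  simp only [cubeE, sum_sub_distrib, sub_div]

theorem cubeE_sum {ι : Type*} (s : Finset ι) (f : ι → (Fin n → Bool) → ℝ) :
    cubeE (fun x => ∑ i ∈ s, f i x) = ∑ i ∈ s, cubeE (f i) := by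
  simp only [cubeE, sum_comm (s := univ), sum_div]

theorem cubeE_eq_zero_of_flipAt_eq_neg {f : (Fin n → Bool) → ℝ} (i : Fin n)
    (hf : ∀ x, f (flipAt x i) = -f x) : cubeE f = 0 := by
  have hsum : ∑ x, f x = -∑ x, f x :=
    calc ∑ x, f x = ∑ x, f (flipAt x i) := (sum_comp_flipAt f i).symm
      _ = -∑ x, f x := by simp only [hf, sum_neg_distrib]
  rw [cubeE, self_eq_neg.mp hsum, zero_div]

end Expectation

section ConditionalExpectation

variable {n : ℕ}

theorem condE_zero (f : (Fin n → Bool) → ℝ) (x : Fin n → Bool) : condE f 0 x = cubeE f := by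
  simp [condE, cubeE]

theorem condE_of_le {j : ℕ} (hj : n ≤ j) (f : (Fin n → Bool) → ℝ) : condE f j = f := by
  funext x
  have hagree (y : Fin n → Bool) : (∀ k : Fin n, (k : ℕ) < j → y k = x k) ↔ y = x := by
    simp only [fun k : Fin n => k.isLt.trans_le hj, forall_const, funext_iff]
  simp only [condE, hagree, sum_ite_eq', mem_univ, if_true, Nat.sub_eq_zero_of_le hj, pow_zero,
    div_one]

theorem condE_sub (f g : (Fin n → Bool) → ℝ) (j : ℕ) (x : Fin n → Bool) :
    condE (fun y => f y - g y) j x = condE f j x - condE g j x := by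
  simp only [condE, ← sub_div, ← sum_sub_distrib, ite_sub_ite, sub_zero]

theorem condE_congr (f : (Fin n → Bool) → ℝ) {j : ℕ} {x y : Fin n → Bool}
    (h : ∀ k : Fin n, (k : ℕ) < j → x k = y k) : condE f j x = condE f j y := by
  have hagree (z : Fin n → Bool) :
      (∀ k : Fin n, (k : ℕ) < j → z k = x k) ↔ ∀ k : Fin n, (k : ℕ) < j → z k = y k :=
    forall₂_congr fun k hk => by rw [h k hk]
  simp only [condE, hagree]

theorem condE_flipAt_of_le (f : (Fin n → Bool) → ℝ) {j : ℕ} {i : Fin n} (hj : j ≤ i)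
    (x : Fin n → Bool) : condE f j (flipAt x i) = condE f j x :=
  condE_congr f fun _ hk => flipAt_apply_of_ne x (Fin.ne_of_lt (hk.trans_le hj))

theorem condE_flipAt (f : (Fin n → Bool) → ℝ) (i : Fin n) (j : ℕ) (x : Fin n → Bool) :
    condE f j (flipAt x i) = condE (fun y => f (flipAt y i)) j x := by
  unfold condE
  rw [← sum_comp_flipAt _ i]
  simp only [flipAt_apply_eq_flipAt_apply_iff]

theorem condE_eq_average_condE_succ (f : (Fin n → Bool) → ℝ) (j : Fin n) (x : Fin n → Bool) :
    condE f j x = (condE f (j + 1) x + condE f (j + 1) (flipAt x j)) / 2 := by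
  have agree_succ_iff (y z : Fin n → Bool) :
      (∀ k : Fin n, (k : ℕ) < j + 1 → y k = z k) ↔
        (∀ k : Fin n, (k : ℕ) < j → y k = z k) ∧ y j = z j := by
    simp only [Nat.lt_succ_iff_lt_or_eq, Fin.val_inj, or_imp, forall_and, forall_eq]
  have agree_flipAt_iff (y : Fin n → Bool) :
      (∀ k : Fin n, (k : ℕ) < j → y k = flipAt x j k) ↔ ∀ k : Fin n, (k : ℕ) < j → y k = x k :=
    forall₂_congr fun k hk => by rw [flipAt_apply_of_ne x (Fin.ne_of_lt hk)]
  have hexp : n - (j : ℕ) = n - (j + 1) + 1 := by omega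
  simp only [condE, agree_succ_iff, agree_flipAt_iff, flipAt_apply_self, Bool.eq_not, hexp,
    pow_succ, ← add_div, div_div, ← sum_add_distrib]
  congr! 2 with y
  by_cases hy : y j = x j <;> simp [hy]

end ConditionalExpectation

/-- The discrete derivative `D_i f (x) = f(x) - f(x ⊕ e_i)`, so that `E(f,f) = Σ_i E[(D_i f)²]`. -/
def flipDiff {n : ℕ} (i : Fin n) (f : (Fin n → Bool) → ℝ) (x : Fin n → Bool) : ℝ :=
  f x - f (flipAt x i)

/-- The martingale difference of `f` across coordinate `j`. Coordinates are numbered from `0`, so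
this is `d_{j+1}` in the usual numbering `d_1, …, d_n`. -/
noncomputable def martingaleDiff {n : ℕ} (f : (Fin n → Bool) → ℝ) (j : ℕ) (x : Fin n → Bool) : ℝ :=
  condE f (j + 1) x - condE f j x

section Differences

variable {n : ℕ}

theorem energy_eq_sum_cubeE_flipDiff_sq (f : (Fin n → Bool) → ℝ) :
    energy f = ∑ i, cubeE (fun x => flipDiff i f x ^ 2) :=
  cubeE_sum univ fun i x => flipDiff i f x ^ 2

theorem cubeE_flipDiff (i : Fin n) (f : (Fin n → Bool) → ℝ) : cubeE (flipDiff i f) = 0 :=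
  cubeE_eq_zero_of_flipAt_eq_neg i fun x => by
    rw [flipDiff, flipDiff, flipAt_flipAt, neg_sub]

theorem flipDiff_condE (i : Fin n) (f : (Fin n → Bool) → ℝ) (j : ℕ) (x : Fin n → Bool) :
    flipDiff i (condE f j) x = condE (flipDiff i f) j x := by
  unfold flipDiff
  rw [condE_sub, condE_flipAt]

theorem flipDiff_martingaleDiff (i : Fin n) (f : (Fin n → Bool) → ℝ) (j : ℕ) (x : Fin n → Bool) :
    flipDiff i (martingaleDiff f j) x = martingaleDiff (flipDiff i f) j x := by
  unfold martingaleDiff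
  rw [← flipDiff_condE, ← flipDiff_condE]
  unfold flipDiff
  ring

theorem martingaleDiff_flipAt (f : (Fin n → Bool) → ℝ) (j : Fin n) (x : Fin n → Bool) :
    martingaleDiff f j (flipAt x j) = -martingaleDiff f j x := by
  unfold martingaleDiff
  rw [condE_flipAt_of_le f le_rfl, condE_eq_average_condE_succ f j x]
  ring

theorem cubeE_martingaleDiff_sq (f : (Fin n → Bool) → ℝ) (j : Fin n) :
    cubeE (fun x => martingaleDiff f j x ^ 2) =
      cubeE (fun x => condE f (j + 1) x ^ 2) - cubeE (fun x => condE f j x ^ 2) := by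
  have horth : cubeE (fun x => -2 * condE f j x * martingaleDiff f j x) = 0 :=
    cubeE_eq_zero_of_flipAt_eq_neg j fun x => by
      rw [martingaleDiff_flipAt, condE_flipAt_of_le f le_rfl, mul_neg]
  have hexpand (x : Fin n → Bool) : -2 * condE f j x * martingaleDiff f j x =
      martingaleDiff f j x ^ 2 - (condE f (j + 1) x ^ 2 - condE f j x ^ 2) := by
    unfold martingaleDiff
    ring
  simp only [hexpand, cubeE_sub] at horth
  exact sub_eq_zero.mp horth

theorem sum_cubeE_martingaleDiff_sq (f : (Fin n → Bool) → ℝ) :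
    ∑ j : Fin n, cubeE (fun x => martingaleDiff f j x ^ 2) =
      cubeE (fun x => f x ^ 2) - cubeE f ^ 2 :=
  calc ∑ j : Fin n, cubeE (fun x => martingaleDiff f j x ^ 2)
    _ = ∑ j ∈ range n,
          (cubeE (fun x => condE f (j + 1) x ^ 2) - cubeE (fun x => condE f j x ^ 2)) := by
      simp only [cubeE_martingaleDiff_sq, sum_range]
    _ = cubeE (fun x => condE f n x ^ 2) - cubeE (fun x => condE f 0 x ^ 2) :=
      sum_range_sub (fun j => cubeE (fun x => condE f j x ^ 2)) n
    _ = cubeE (fun x => f x ^ 2) - cubeE f ^ 2 := by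
      simp only [condE_of_le le_rfl, condE_zero, cubeE_const]

end Differences

/-- The Dirichlet form is additive over the martingale differences:
`E(f,f) = Σ_i E(d_i, d_i)` where `d_i = f_i - f_{i-1}`. -/
theorem energy_additive_over_martingale_differences {n : ℕ} (f : (Fin n → Bool) → ℝ) :
    energy f = ∑ i : Fin n,
      energy (fun x => condE f ((i : ℕ) + 1) x - condE f (i : ℕ) x) := by
  calc energy f
    _ = ∑ k, cubeE (fun x => flipDiff k f x ^ 2) := energy_eq_sum_cubeE_flipDiff_sq f
    _ = ∑ k, ∑ i : Fin n, cubeE (fun x => martingaleDiff (flipDiff k f) i x ^ 2) := by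
      simp only [sum_cubeE_martingaleDiff_sq, cubeE_flipDiff, zero_pow two_ne_zero, sub_zero]
    _ = ∑ i : Fin n, ∑ k, cubeE (fun x => flipDiff k (martingaleDiff f i) x ^ 2) := by
      simp only [flipDiff_martingaleDiff]
      exact sum_comm
    _ = ∑ i : Fin n, energy (martingaleDiff f i) := by
      simp only [energy_eq_sum_cubeE_flipDiff_sq]
end
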